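/- (RD identification, Hahn–Todd–van der Klaauw.) Let (Ω, ℱ, μ) be a probability space, V : Ω → ℝ measurable, ξ ∈ ℝ, O(0) and O(1) integrable real-valued random variables, D = 𝟙{V ≥ ξ}, and O = D·O(1) + (1 − D)·O(0). Suppose m₀, m₁ : ℝ → ℝ are Borel functions with m_d ∘ V equal μ-a.e. to the conditional expectation of O(d) given the σ-algebra generated by V, for d ∈ {0,1}, and suppose m₀ and m₁ are continuous at ξ (RD-continuity). Define m : ℝ → ℝ by m(v) = m₁(v) if v ≥ ξ and m(v) = m₀(v) if v < ξ. Then: (a) m ∘ V equals μ-a.e. the conditional expectation of O given the σ-algebra generated by V; and (b) m(v) tends to m₁(ξ) as v → ξ from the right and to m₀(ξ) as v → ξ from the left, so lim_{v→ξ⁺} m(v) − lim_{v→ξ⁻} m(v) = m₁(ξ) − m₀(ξ), which is the RD causal estimand τ_RD = E[O(1) − O(0) | V = ξ] computed from the continuous versions m₀, m₁. -/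

import Mathlib

open MeasureTheory Filter

open scoped Topology

/-! The treatment indicator is a function of the running variable, so it passes through the
conditional expectation: the regression function of the observed outcome is `m₁` on `[ξ, ∞)` and
`m₀` on `(-∞, ξ)`. On each side of the cutoff it therefore coincides with a single one of the two,
whose one-sided limit at `ξ` is its value there. -/

section CondExp

variable {Ω X E : Type*} {mΩ : MeasurableSpace Ω} [mX : MeasurableSpace X]
  [NormedAddCommGroup E] [NormedSpace ℝ E] [CompleteSpace E] {μ : Measure Ω}

theorem condExp_piecewise {m : MeasurableSpace Ω} {f g : Ω → E} {s : Set Ω}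
    [DecidablePred (· ∈ s)] (hf : Integrable f μ) (hg : Integrable g μ)
    (hs : MeasurableSet[m] s) :
    μ[s.piecewise f g | m] =ᵐ[μ] s.piecewise (μ[f | m]) (μ[g | m]) := by
  by_cases hm : m ≤ mΩ
  · simp only [← Set.indicator_add_compl_eq_piecewise]
    calc μ[s.indicator f + sᶜ.indicator g | m]
      _ =ᵐ[μ] μ[s.indicator f | m] + μ[sᶜ.indicator g | m] :=
        condExp_add (hf.indicator (hm s hs)) (hg.indicator (hm s hs).compl) m
      _ =ᵐ[μ] s.indicator (μ[f | m]) + sᶜ.indicator (μ[g | m]) :=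
        (condExp_indicator hf hs).add (condExp_indicator hg hs.compl)
  · simp only [condExp_of_not_le hm, Set.piecewise_same, EventuallyEq.rfl]

/-- `m` is a version of the regression function `v ↦ E[Y | V = v]`. For Banach-valued `Y`, being
Borel is encoded as strong measurability, which is equivalent to it for real-valued `m`. -/
structure IsRegressionFunction (μ : Measure Ω) (V : Ω → X) (Y : Ω → E) (m : X → E) : Prop where
  stronglyMeasurable : StronglyMeasurable m
  comp_ae_eq_condExp : m ∘ V =ᵐ[μ] μ[Y | mX.comap V]

theorem IsRegressionFunction.piecewise {V : Ω → X} {f g : Ω → E} {m n : X → E}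
    {s : Set X} [DecidablePred (· ∈ s)]
    (hm : IsRegressionFunction μ V f m) (hn : IsRegressionFunction μ V g n)
    (hf : Integrable f μ) (hg : Integrable g μ) (hs : MeasurableSet s) :
    IsRegressionFunction μ V (fun ω ↦ if V ω ∈ s then f ω else g ω) (s.piecewise m n) where
  stronglyMeasurable := hm.stronglyMeasurable.piecewise hs hn.stronglyMeasurable
  comp_ae_eq_condExp := by
    let : DecidablePred (· ∈ V ⁻¹' s) := fun ω ↦ inferInstanceAs (Decidable (V ω ∈ s))
    have hVs : MeasurableSet[mX.comap V] (V ⁻¹' s) := ⟨s, hs, rfl⟩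
    calc s.piecewise m n ∘ V
      _ = (V ⁻¹' s).piecewise (m ∘ V) (n ∘ V) := Set.piecewise_comp s m n V
      _ =ᵐ[μ] (V ⁻¹' s).piecewise (μ[f | mX.comap V]) (μ[g | mX.comap V]) := by
        filter_upwards [hm.comp_ae_eq_condExp, hn.comp_ae_eq_condExp] with ω hmω hnω
        simp only [Set.piecewise, hmω, hnω]
      _ =ᵐ[μ] μ[(V ⁻¹' s).piecewise f g | mX.comap V] := (condExp_piecewise hf hg hVs).symm

end CondExp

theorem rd_identification_general
    {Ω X E : Type*} [MeasurableSpace Ω] (μ : Measure Ω)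
    [LinearOrder X] [TopologicalSpace X] [ClosedIciTopology X]
    [MeasurableSpace X] [OpensMeasurableSpace X]
    [NormedAddCommGroup E] [NormedSpace ℝ E] [CompleteSpace E]
    (V : Ω → X) (hV : Measurable V) [SigmaFinite (μ.trim hV.comap_le)] (ξ : X)
    (O0 O1 : Ω → E) (hO0 : Integrable O0 μ) (hO1 : Integrable O1 μ)
    (O : Ω → E) (hO : ∀ ω, O ω = if ξ ≤ V ω then O1 ω else O0 ω)
    (m0 m1 : X → E) (hm0 : IsRegressionFunction μ V O0 m0) (hm1 : IsRegressionFunction μ V O1 m1)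
    (hc0 : ContinuousWithinAt m0 (Set.Iio ξ) ξ) (hc1 : ContinuousWithinAt m1 (Set.Ioi ξ) ξ)
    (m : X → E) (hm : ∀ v, m v = if ξ ≤ v then m1 v else m0 v) :
    IsRegressionFunction μ V O m ∧
      Tendsto m (𝓝[>] ξ) (𝓝 (m1 ξ)) ∧ Tendsto m (𝓝[<] ξ) (𝓝 (m0 ξ)) := by
  refine ⟨?_, ?_, ?_⟩
  · obtain rfl : O = fun ω ↦ if V ω ∈ Set.Ici ξ then O1 ω else O0 ω := funext hO
    obtain rfl : m = (Set.Ici ξ).piecewise m1 m0 := funext hm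
    exact hm1.piecewise hm0 hO1 hO0 measurableSet_Ici
  · refine tendsto_nhdsWithin_congr (fun v hv ↦ ?_) hc1
    rw [hm, if_pos (le_of_lt hv)]
  · refine tendsto_nhdsWithin_congr (fun v hv ↦ ?_) hc0
    rw [hm, if_neg (not_le_of_gt hv)]

/-- RD identification, Hahn–Todd–van der Klaauw: with running variable
`V`, cutoff `ξ`, treatment `D = 𝟙{V ≥ ξ}`, observed outcome
`O = D·O(1) + (1 − D)·O(0)`, and Borel versions `m₀, m₁` of the conditional-mean
functions `v ↦ E[O(d) | V = v]` that are continuous at `ξ`, the function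
`m(v) = m₁(v)` for `v ≥ ξ` and `m₀(v)` for `v < ξ` is a version of `v ↦ E[O | V = v]`,
and `m` tends to `m₁(ξ)` from the right of `ξ` and to `m₀(ξ)` from the left, so the
jump of the observed regression function at `ξ` is `m₁(ξ) − m₀(ξ) = τ_RD`. -/
theorem rd_identification
    {Ω : Type*} [MeasurableSpace Ω] (μ : Measure Ω) [IsProbabilityMeasure μ]
    (V : Ω → ℝ) (hV : Measurable V) (ξ : ℝ)
    (O0 O1 : Ω → ℝ) (hO0 : Integrable O0 μ) (hO1 : Integrable O1 μ)
    (O : Ω → ℝ)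
    (hO : ∀ ω, O ω =
      (if ξ ≤ V ω then (1 : ℝ) else 0) * O1 ω +
        (1 - (if ξ ≤ V ω then (1 : ℝ) else 0)) * O0 ω)
    (m0 m1 : ℝ → ℝ) (hm0 : Measurable m0) (hm1 : Measurable m1)
    (hv0 : (fun ω => m0 (V ω)) =ᵐ[μ] μ[O0 | MeasurableSpace.comap V (borel ℝ)])
    (hv1 : (fun ω => m1 (V ω)) =ᵐ[μ] μ[O1 | MeasurableSpace.comap V (borel ℝ)])
    (hc0 : ContinuousAt m0 ξ) (hc1 : ContinuousAt m1 ξ)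
    (m : ℝ → ℝ) (hm : ∀ v, m v = if ξ ≤ v then m1 v else m0 v) :
    ((fun ω => m (V ω)) =ᵐ[μ] μ[O | MeasurableSpace.comap V (borel ℝ)]) ∧
      Tendsto m (nhdsWithin ξ (Set.Ioi ξ)) (nhds (m1 ξ)) ∧
      Tendsto m (nhdsWithin ξ (Set.Iio ξ)) (nhds (m0 ξ)) := by
  obtain ⟨hreg, hlim⟩ := rd_identification_general μ V hV ξ O0 O1 hO0 hO1 O
    (fun ω ↦ by rw [hO]; split_ifs <;> simp) m0 m1 ⟨hm0.stronglyMeasurable, hv0⟩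
    ⟨hm1.stronglyMeasurable, hv1⟩ hc0.continuousWithinAt hc1.continuousWithinAt m hm
  exact ⟨hreg.comp_ae_eq_condExp, hlim⟩
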